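/- arXiv:2111.14477 — 2 statements merged into one kernel-verified Lean document; each statement's English description precedes it below -/
import Mathlib

section
/- Let A = S(n), where n is odd and squarefree, every prime divisor of n is at least 7, and Ω(n) ≥ 2. Let S = (x_1,…,x_k) be a sequence in Z_n of length k = Ω(n). (i) Suppose S is equivalent with respect to A to a sequence (y_1,…,y_k) for which there is a prime divisor p of n such that p does not divide y_1 but p divides y_i for all i ≥ 2, and, setting n' = n/p and letting T' be the image of (y_2,…,y_k) under the natural map Z_n → Z_{n'}, the sequence T' is a U(n')-extremal sequence for the Davenport constant. Then S is an A-extremal sequence for the Davenport constant. (ii) If Ω(n) = 2 and S is equivalent with respect to A to a sequence (y_1, y_2) with y_1 ∈ S(n) and −y_2 ∈ U(n) ∖ S(n), then S is an A-extremal sequence for the Davenport constant. -/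
open scoped BigOperators

/-- `S` is an `A`-weighted zero-sum sequence in `ZMod n`. -/
def IsWZS {n : ℕ} (A : Set (ZMod n)) {l : ℕ} (S : Fin l → ZMod n) : Prop :=
  ∃ a : Fin l → ZMod n, (∀ i, a i ∈ A) ∧ ∑ i, a i * S i = 0

/-- `S` has a nonempty subsequence which is an `A`-weighted zero-sum sequence. -/
def HasWZSSub {n : ℕ} (A : Set (ZMod n)) {l : ℕ} (S : Fin l → ZMod n) : Prop :=
  ∃ I : Finset (Fin l), I.Nonempty ∧ ∃ a : Fin l → ZMod n,
    (∀ i ∈ I, a i ∈ A) ∧ ∑ i ∈ I, a i * S i = 0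

/-- The `A`-weighted Davenport constant of `ZMod n`: the least positive integer `k`
such that every sequence of `k` elements of `ZMod n` has a nonempty subsequence
which is an `A`-weighted zero-sum sequence. -/
noncomputable def DavW (n : ℕ) (A : Set (ZMod n)) : ℕ :=
  sInf {k | 0 < k ∧ ∀ S : Fin k → ZMod n, HasWZSSub A S}

/-- An `A`-extremal sequence for the Davenport constant: a sequence of length
`D_A(n) - 1` with no nonempty `A`-weighted zero-sum subsequence. -/
def IsExtremal (n : ℕ) (A : Set (ZMod n)) {l : ℕ} (S : Fin l → ZMod n) : Prop :=
  l = DavW n A - 1 ∧ ¬ HasWZSSub A S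

/-- The set of units of `ZMod n`, as a weight set. -/
def USet (n : ℕ) : Set (ZMod n) := {a | IsUnit a}

/-- `S(n)`: the units `a` of `ZMod n` with Jacobi symbol `(a/n) = 1`. -/
def JSet (n : ℕ) : Set (ZMod n) := {a | IsUnit a ∧ jacobiSym (a.val : ℤ) n = 1}

/-- `L(n;p)`: the units `a` of `ZMod n` with `(a/n) = (a/p)`. -/
def LSet (n p : ℕ) : Set (ZMod n) :=
  {a | IsUnit a ∧ jacobiSym (a.val : ℤ) n = jacobiSym (a.val : ℤ) p}

/-- Two sequences are equivalent with respect to the weight set `A`. -/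
def EquivWrt {n : ℕ} (A : Set (ZMod n)) {k : ℕ} (x y : Fin k → ZMod n) : Prop :=
  ∃ (a : Fin k → ZMod n) (c : (ZMod n)ˣ) (σ : Equiv.Perm (Fin k)),
    (∀ i, a i ∈ A) ∧ ∀ i, y (σ i) = (c : ZMod n) * (a i * x i)

/-! ### Local lemmas over `ZMod p` -/

lemma conic_aux {F : Type*} [Field F] (c1 c2 t u0 : F) (h1 : c1 ≠ 0) (h2 : c2 ≠ 0) (ht : t ≠ 0)
    (n2 : (2:F) ≠ 0) (n3 : (3:F) ≠ 0) (n5 : (5:F) ≠ 0)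
    (h : c1 * u0 ^ 2 = t) : ∃ u v : F, u ≠ 0 ∧ v ≠ 0 ∧ c1 * u ^ 2 + c2 * v ^ 2 = t := by
  have hu0 : u0 ≠ 0 := by
    rintro rfl
    exact ht (by rw [← h]; ring)
  have key : ∃ m : F, m ≠ 0 ∧ c2 * m ^ 2 - c1 ≠ 0 ∧ c1 + c2 * m ^ 2 ≠ 0 := by
    by_contra hcon
    push Not at hcon
    have a1 := hcon 1 one_ne_zero
    have a2 := hcon 2 n2
    have a3 := hcon 3 n3
    have e3 : (3:F) * c2 ≠ 0 := mul_ne_zero n3 h2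
    have e5 : (5:F) * c2 ≠ 0 := mul_ne_zero n5 h2
    have e8 : (2:F) * 2 * 2 * c2 ≠ 0 := mul_ne_zero (mul_ne_zero (mul_ne_zero n2 n2) n2) h2
    have b1 : c2 * 1 ^ 2 - c1 = 0 ∨ c1 + c2 * 1 ^ 2 = 0 := or_iff_not_imp_left.2 a1
    have b2 : c2 * 2 ^ 2 - c1 = 0 ∨ c1 + c2 * 2 ^ 2 = 0 := or_iff_not_imp_left.2 a2
    have b3 : c2 * 3 ^ 2 - c1 = 0 ∨ c1 + c2 * 3 ^ 2 = 0 := or_iff_not_imp_left.2 a3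
    rcases b1 with b1 | b1 <;> rcases b2 with b2 | b2 <;> rcases b3 with b3 | b3
    all_goals first
      | exact e3 (by linear_combination b2 - b1)
      | exact e5 (by linear_combination b3 - b2)
      | exact e8 (by linear_combination b3 - b1)
  obtain ⟨m, hm, ha, hb⟩ := key
  refine ⟨u0 * (c2 * m ^ 2 - c1) / (c1 + c2 * m ^ 2), m * (-2 * c1 * u0) / (c1 + c2 * m ^ 2),
    div_ne_zero (mul_ne_zero hu0 ha) hb,
    div_ne_zero (mul_ne_zero hm (mul_ne_zero (mul_ne_zero (neg_ne_zero.2 n2) h1) hu0)) hb, ?_⟩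
  rw [← h]
  field_simp
  ring

lemma small_ne_zero (p : ℕ) (h7 : 7 ≤ p) (m : ℕ) (hm : 0 < m) (hm7 : m < 7) :
    ((m : ℕ) : ZMod p) ≠ 0 := by
  intro h
  rw [ZMod.natCast_eq_zero_iff] at h
  have := Nat.le_of_dvd hm h
  omega

lemma conic (p : ℕ) [Fact p.Prime] (h7 : 7 ≤ p) (c1 c2 t : ZMod p) (h1 : c1 ≠ 0) (h2 : c2 ≠ 0)
    (ht : t ≠ 0) : ∃ u v : ZMod p, u ≠ 0 ∧ v ≠ 0 ∧ c1 * u ^ 2 + c2 * v ^ 2 = t := by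
  have n2 : (2 : ZMod p) ≠ 0 := by exact_mod_cast small_ne_zero p h7 2 (by norm_num) (by norm_num)
  have n3 : (3 : ZMod p) ≠ 0 := by exact_mod_cast small_ne_zero p h7 3 (by norm_num) (by norm_num)
  have n5 : (5 : ZMod p) ≠ 0 := by exact_mod_cast small_ne_zero p h7 5 (by norm_num) (by norm_num)
  have hex : ∃ u v : ZMod p, c1 * u ^ 2 + c2 * v ^ 2 = t := by
    open Polynomial in
    have hf : (C c1 * X ^ 2 : (ZMod p)[X]).degree = 2 := by
      rw [degree_C_mul_X_pow 2 h1]; rfl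
    have hg : (C c2 * X ^ 2 - C t : (ZMod p)[X]).degree = 2 := by
      rw [degree_sub_C] <;> rw [degree_C_mul_X_pow 2 h2] <;> norm_num
    obtain ⟨a, b, hab⟩ := FiniteField.exists_root_sum_quadratic hf hg
      (by rw [ZMod.card]; exact Nat.odd_iff.1 ((Fact.out : p.Prime).odd_of_ne_two (by omega)))
    refine ⟨a, b, ?_⟩
    simp at hab
    linear_combination hab
  obtain ⟨u, v, h⟩ := hex
  by_cases hv : v = 0
  · subst hv
    exact conic_aux c1 c2 t u h1 h2 ht n2 n3 n5 (by rw [← h]; ring)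
  by_cases hu : u = 0
  · subst hu
    obtain ⟨a, b, ha, hb, hab⟩ := conic_aux c2 c1 t v h2 h1 ht n2 n3 n5 (by rw [← h]; ring)
    exact ⟨b, a, hb, ha, by rw [← hab]; ring⟩
  exact ⟨u, v, hu, hv, h⟩

lemma exists_class (p : ℕ) [Fact p.Prime] (h7 : 7 ≤ p) (e : ℤˣ) :
    ∃ r : ZMod p, quadraticChar (ZMod p) r = e := by
  rcases Int.units_eq_one_or e with rfl | rfl
  · exact ⟨1, by simp⟩
  · obtain ⟨r, hr⟩ := quadraticChar_exists_neg_one (F := ZMod p) (by rw [ZMod.ringChar_zmod_n]; omega)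
    exact ⟨r, by simpa using hr⟩

lemma class_ne_zero {p : ℕ} [Fact p.Prime] {r : ZMod p} {e : ℤˣ}
    (h : quadraticChar (ZMod p) r = e) : r ≠ 0 := by
  rintro rfl
  rw [quadraticChar_zero] at h
  exact e.ne_zero h.symm

lemma class_mul_sq {p : ℕ} [Fact p.Prime] {r u : ZMod p} {e : ℤˣ}
    (h : quadraticChar (ZMod p) r = e) (hu : u ≠ 0) : quadraticChar (ZMod p) (r * u ^ 2) = e := by
  rw [map_mul, quadraticChar_sq_one' hu, h, mul_one]

lemma three_terms (p : ℕ) [Fact p.Prime] (h7 : 7 ≤ p) (y1 y2 y3 t : ZMod p) (h1 : y1 ≠ 0)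
    (h2 : y2 ≠ 0) (h3 : y3 ≠ 0) (e1 e2 e3 : ℤˣ) :
    ∃ b1 b2 b3 : ZMod p, quadraticChar (ZMod p) b1 = e1 ∧ quadraticChar (ZMod p) b2 = e2 ∧
      quadraticChar (ZMod p) b3 = e3 ∧ b1 * y1 + b2 * y2 + b3 * y3 = t := by
  obtain ⟨r1, hr1⟩ := exists_class p h7 e1
  obtain ⟨r2, hr2⟩ := exists_class p h7 e2
  obtain ⟨r3, hr3⟩ := exists_class p h7 e3
  have n2 : (2 : ZMod p) ≠ 0 := by exact_mod_cast small_ne_zero p h7 2 (by norm_num) (by norm_num)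
  have n3 : (3 : ZMod p) ≠ 0 := by exact_mod_cast small_ne_zero p h7 3 (by norm_num) (by norm_num)
  have hw : ∃ w : ZMod p, w ≠ 0 ∧ t - r3 * w ^ 2 * y3 ≠ 0 := by
    by_contra hcon
    push Not at hcon
    have a1 := hcon 1 one_ne_zero
    have a2 := hcon 2 n2
    exact mul_ne_zero (mul_ne_zero n3 (class_ne_zero hr3)) h3 (by linear_combination a1 - a2)
  obtain ⟨w, hw, ht⟩ := hw
  obtain ⟨u, v, hu, hv, huv⟩ := conic p h7 (r1 * y1) (r2 * y2) _
    (mul_ne_zero (class_ne_zero hr1) h1) (mul_ne_zero (class_ne_zero hr2) h2) ht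
  exact ⟨r1 * u ^ 2, r2 * v ^ 2, r3 * w ^ 2, class_mul_sq hr1 hu, class_mul_sq hr2 hv,
    class_mul_sq hr3 hw, by linear_combination huv⟩

/-- The sign pattern `e` is achievable modulo `p` on the subsequence `I` of `x`. -/
def Ach {ι : Type*} (x : ι → ℕ) (I : Finset ι) (p : ℕ) (e : ι → ℤˣ) : Prop :=
  ∃ b : ι → ℕ, (∀ i, jacobiSym (b i : ℤ) p = e i) ∧ p ∣ ∑ i ∈ I, b i * x i

lemma ach_of_zmod {ι : Type*} (x : ι → ℕ) (I : Finset ι) (p : ℕ) [Fact p.Prime] (e : ι → ℤˣ)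
    (b : ι → ZMod p) (hb : ∀ i, quadraticChar (ZMod p) (b i) = e i)
    (hs : ∑ i ∈ I, b i * (x i : ZMod p) = 0) : Ach x I p e := by
  refine ⟨fun i => (b i).val, fun i => ?_, ?_⟩
  · rw [← jacobiSym.legendreSym.to_jacobiSym, legendreSym, ← hb i]
    simp
  · rw [← ZMod.natCast_eq_zero_iff]
    push_cast
    simpa using hs

section Comb

variable {ι : Type*} [DecidableEq ι]

lemma ach_zero (x : ι → ℕ) (I : Finset ι) (p : ℕ) (hp : p.Prime) (h7 : 7 ≤ p) 
    (h : ∀ i ∈ I, p ∣ x i) (e : ι → ℤˣ) : Ach x I p e := by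
  have := Fact.mk hp
  choose b hb using fun i => exists_class p h7 (e i)
  refine ach_of_zmod x I p e b hb (Finset.sum_eq_zero fun i hi => ?_)
  rw [(ZMod.natCast_eq_zero_iff _ _).2 (h i hi), mul_zero]

lemma ach_three (x : ι → ℕ) (I : Finset ι) (p : ℕ) (hp : p.Prime) (h7 : 7 ≤ p)
    (h : 2 < (I.filter (fun i => ¬ p ∣ x i)).card) (e : ι → ℤˣ) : Ach x I p e := by
  have := Fact.mk hp
  obtain ⟨i, j, l, hi, hj, hl, hij, hil, hjl⟩ := Finset.two_lt_card_iff.1 h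
  simp only [Finset.mem_filter] at hi hj hl
  choose b hb using fun i => exists_class p h7 (e i)
  have hnz : ∀ {i}, ¬ p ∣ x i → (x i : ZMod p) ≠ 0 := fun hi h =>
    hi ((ZMod.natCast_eq_zero_iff _ _).1 h)
  obtain ⟨b1, b2, b3, h1, h2, h3, hs⟩ := three_terms p h7 (x i) (x j) (x l)
    (- ∑ m ∈ ((I.erase i).erase j).erase l, b m * (x m : ZMod p)) (hnz hi.2) (hnz hj.2) (hnz hl.2)
    (e i) (e j) (e l)
  refine ach_of_zmod x I p e
    (fun m => if m = i then b1 else if m = j then b2 else if m = l then b3 else b m) ?_ ?_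
  · intro m
    split_ifs with c1 c2 c3
    · rw [c1, h1]
    · rw [c2, h2]
    · rw [c3, h3]
    · exact hb m
  · rw [← Finset.add_sum_erase _ _ hi.1,
      ← Finset.add_sum_erase (I.erase i) _ (a := j) (by simp [hij.symm, hj.1]),
      ← Finset.add_sum_erase ((I.erase i).erase j) _ (a := l) (by simp [hil.symm, hjl.symm, hl.1])]
    have : ∑ m ∈ ((I.erase i).erase j).erase l,
        (if m = i then b1 else if m = j then b2 else if m = l then b3 else b m) * (x m : ZMod p)
        = ∑ m ∈ ((I.erase i).erase j).erase l, b m * (x m : ZMod p) := by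
      refine Finset.sum_congr rfl fun m hm => ?_
      simp only [Finset.mem_erase] at hm
      rw [if_neg hm.2.2.1, if_neg hm.2.1, if_neg hm.1]
    rw [this]
    simp only [if_true, if_neg hij.symm, if_neg hil.symm, if_neg hjl.symm]
    linear_combination hs

lemma ach_two (x : ι → ℕ) (I : Finset ι) (p : ℕ) (hp : p.Prime) (h7 : 7 ≤ p) (u v : ι)
    (huv : u ≠ v) (h : I.filter (fun i => ¬ p ∣ x i) = {u, v}) :
    ∃ s : ℤˣ, ∀ e : ι → ℤˣ, e u * e v = s → Ach x I p e := by
  have := Fact.mk hp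
  have hnz : ∀ {i}, ¬ p ∣ x i → (x i : ZMod p) ≠ 0 := fun hi h =>
    hi ((ZMod.natCast_eq_zero_iff _ _).1 h)
  have hu : u ∈ I.filter (fun i => ¬ p ∣ x i) := by rw [h]; simp
  have hv : v ∈ I.filter (fun i => ¬ p ∣ x i) := by rw [h]; simp
  simp only [Finset.mem_filter] at hu hv
  have hxu := hnz hu.2
  have hxv := hnz hv.2
  obtain ⟨s, hs⟩ : ∃ s : ℤˣ, quadraticChar (ZMod p) (-(x u : ZMod p) / x v) = s := by
    rcases quadraticChar_dichotomy (F := ZMod p) (div_ne_zero (neg_ne_zero.2 hxu) hxv) with h | h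
    · exact ⟨1, by simpa using h⟩
    · exact ⟨-1, by simpa using h⟩
  refine ⟨s, fun e he => ?_⟩
  choose b hb using fun i => exists_class p h7 (e i)
  refine ach_of_zmod x I p e
    (fun m => if m = v then b u * (-(x u : ZMod p) / x v) else b m) ?_ ?_
  · intro m
    split_ifs with c
    · rw [map_mul, hs, hb, c, ← he, ← Units.val_mul, ← mul_assoc, Int.units_mul_self, one_mul]
    · exact hb m
  · rw [← Finset.sum_filter_add_sum_filter_not I (fun i => ¬ p ∣ x i), h, Finset.sum_pair huv,
      if_neg huv, if_pos rfl]
    rw [Finset.sum_eq_zero (s := I.filter (fun i => ¬ ¬ p ∣ x i))]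
    · field_simp
      ring
    · intro m hm
      simp only [Finset.mem_filter, not_not] at hm
      rw [(ZMod.natCast_eq_zero_iff _ _).2 hm.2, mul_zero]

lemma ach_exists (x : ι → ℕ) (I : Finset ι) (p : ℕ) (hp : p.Prime) (h7 : 7 ≤ p)
    (h : (I.filter (fun i => ¬ p ∣ x i)).card ≠ 1) : ∃ e, Ach x I p e := by
  rcases lt_trichotomy (I.filter (fun i => ¬ p ∣ x i)).card 2 with h2 | h2 | h2
  · refine ⟨1, ach_zero x I p hp h7 ?_ 1⟩
    have h0 : (I.filter (fun i => ¬ p ∣ x i)).card = 0 := by omega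
    rw [Finset.card_eq_zero, Finset.filter_eq_empty_iff] at h0
    intro i hi
    simpa using h0 hi
  · obtain ⟨u, v, huv, hh⟩ := Finset.card_eq_two.1 h2
    obtain ⟨s, hs⟩ := ach_two x I p hp h7 u v huv hh
    exact ⟨fun i => if i = u then s else 1, hs _ (by simp [huv.symm])⟩
  · exact ⟨1, ach_three x I p hp h7 h2 1⟩

lemma reduce (N : ℕ → Finset ι) : ∀ (P : Finset ℕ) (I : Finset ι), P.card < I.card →
    ∃ J : Finset ι, J.Nonempty ∧ (∀ p ∈ P, (J ∩ N p).card ≠ 1) ∧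
      (J = I ∨ ∃ p ∈ P, J ∩ N p = ∅) ∧ J ⊆ I := by
  intro P
  induction P using Finset.strongInduction with
  | H P ih =>
    intro I hI
    by_cases hall : ∀ p ∈ P, (I ∩ N p).card ≠ 1
    · exact ⟨I, Finset.card_pos.1 (by omega), hall, Or.inl rfl, subset_rfl⟩
    push Not at hall
    obtain ⟨p, hp, h1⟩ := hall
    have hc := Finset.card_sdiff_add_card_inter I (N p)
    have hc2 := Finset.card_erase_add_one hp
    obtain ⟨J, hJ, hJ1, -, hJI⟩ := ih (P.erase p) (Finset.erase_ssubset hp) (I \ N p) (by omega)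
    have hemp : J ∩ N p = ∅ := by
      rw [← Finset.disjoint_iff_inter_eq_empty]
      exact Finset.disjoint_of_subset_left hJI Finset.sdiff_disjoint
    refine ⟨J, hJ, fun q hq => ?_, Or.inr ⟨p, hp, hemp⟩, hJI.trans Finset.sdiff_subset⟩
    by_cases hqp : q = p
    · rw [hqp, hemp]; simp
    · exact hJ1 q (Finset.mem_erase.2 ⟨hqp, hq⟩)

/-- If some prime admits all sign patterns, the patterns can be combined. -/
lemma combine_flex (x : ι → ℕ) (I : Finset ι) (P : Finset ℕ) (E : ℕ → ι → ℤˣ)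
    (hE : ∀ p ∈ P, Ach x I p (E p)) (q : ℕ) (hq : q ∈ P) (hf : ∀ e, Ach x I q e) :
    ∃ E' : ℕ → ι → ℤˣ, (∀ p ∈ P, Ach x I p (E' p)) ∧ ∀ i, ∏ p ∈ P, E' p i = 1 := by
  refine ⟨Function.update E q (fun i => (∏ p ∈ P.erase q, E p i)⁻¹), fun p hp => ?_, fun i => ?_⟩
  · by_cases h : p = q
    · subst h; exact hf _
    · rw [Function.update_of_ne h]; exact hE p hp
  · rw [← Finset.mul_prod_erase P _ hq, Function.update_self, inv_mul_eq_one]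
    refine Finset.prod_congr rfl fun p hp => ?_
    rw [Function.update_of_ne (Finset.ne_of_mem_erase hp)]

lemma combine_two (x : ι → ℕ) (I : Finset ι) (P : Finset ℕ) (E : ℕ → ι → ℤˣ)
    (hE : ∀ p ∈ P, Ach x I p (E p)) (q r : ℕ) (hq : q ∈ P) (hr : r ∈ P) (hqr : q ≠ r)
    (u v i w : ι) (huv : u ≠ v) (hiw : i ≠ w) (hiu : i ≠ u) (hiv : i ≠ v)
    (s s' : ℤˣ) (hs : ∀ e : ι → ℤˣ, e u * e v = s → Ach x I q e)
    (hs' : ∀ e : ι → ℤˣ, e i * e w = s' → Ach x I r e) :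
    ∃ E' : ℕ → ι → ℤˣ, (∀ p ∈ P, Ach x I p (E' p)) ∧ ∀ i, ∏ p ∈ P, E' p i = 1 := by
  set τ : ι → ℤˣ := fun j => ∏ p ∈ (P.erase q).erase r, E p j with hτ
  set a0 : ι → ℤˣ := Function.update 1 u s with ha0
  set a : ι → ℤˣ := Function.update a0 i (s' * τ i * τ w * a0 w) with ha
  have hau : a u = s := by rw [ha, Function.update_of_ne hiu.symm, ha0, Function.update_self]
  have hav : a v = 1 := by
    rw [ha, Function.update_of_ne hiv.symm, ha0, Function.update_of_ne huv.symm]; rfl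
  have hai : a i = s' * τ i * τ w * a0 w := by rw [ha, Function.update_self]
  have haw : a w = a0 w := by rw [ha, Function.update_of_ne hiw.symm]
  have sq : ∀ z : ℤˣ, z * z = 1 := Int.units_mul_self
  refine ⟨Function.update (Function.update E q a) r (fun j => τ j * a j), fun p hp => ?_,
    fun j => ?_⟩
  · by_cases h : p = r
    · subst h
      rw [Function.update_self]
      apply hs'
      rw [hai, haw]
      calc τ i * (s' * τ i * τ w * a0 w) * (τ w * a0 w)
          = s' * (τ i * τ i) * (τ w * τ w) * (a0 w * a0 w) := by
            simp only [mul_assoc, mul_comm, mul_left_comm]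
        _ = s' := by simp only [sq, mul_one]
    · rw [Function.update_of_ne h]
      by_cases h' : p = q
      · subst h'
        rw [Function.update_self]
        exact hs _ (by rw [hau, hav, mul_one])
      · rw [Function.update_of_ne h']; exact hE p hp
  · rw [← Finset.mul_prod_erase P _ hq,
      ← Finset.mul_prod_erase (P.erase q) _ (Finset.mem_erase.2 ⟨hqr.symm, hr⟩),
      Function.update_self, Function.update_of_ne hqr, Function.update_self]
    have : ∏ p ∈ (P.erase q).erase r, Function.update (Function.update E q a) r
        (fun j => τ j * a j) p j = τ j := by
      refine Finset.prod_congr rfl fun p hp => ?_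
      simp only [Finset.mem_erase] at hp
      rw [Function.update_of_ne hp.1, Function.update_of_ne hp.2.1]
    rw [this]
    calc a j * (τ j * a j * τ j) = (a j * a j) * (τ j * τ j) := by
          simp only [mul_assoc, mul_comm, mul_left_comm]
      _ = 1 := by simp only [sq, mul_one]

end Comb

/-! ### Gluing by the Chinese remainder theorem -/

lemma jacobi_prod (a : ℤ) (n : ℕ) (hsf : Squarefree n) :
    jacobiSym a n = ∏ p ∈ n.primeFactors, jacobiSym a p := by
  have key : ∀ P : Finset ℕ, (∀ p ∈ P, p ≠ 0) →
      jacobiSym a (∏ p ∈ P, p) = ∏ p ∈ P, jacobiSym a p := by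
    intro P
    induction P using Finset.induction_on with
    | empty => intro _; simp
    | insert q P hq ih =>
      intro h
      rw [Finset.prod_insert hq, Finset.prod_insert hq, jacobiSym.mul_right' _
        (h q (Finset.mem_insert_self _ _))
        (Finset.prod_ne_zero_iff.2 fun p hp => h p (Finset.mem_insert_of_mem hp)),
        ih fun p hp => h p (Finset.mem_insert_of_mem hp)]
  conv_lhs => rw [← Nat.prod_primeFactors_of_squarefree hsf]
  exact key _ fun p hp => (Nat.prime_of_mem_primeFactors hp).ne_zero

lemma jacobi_val_cast (n : ℕ) (a : ℕ) :
    jacobiSym (((a : ZMod n).val : ℕ) : ℤ) n = jacobiSym (a : ℤ) n := by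
  rw [ZMod.val_natCast, Int.natCast_mod, ← jacobiSym.mod_left]

lemma isUnit_of_jacobi (n : ℕ) (hn : n ≠ 0) (a : ZMod n) (h : jacobiSym (a.val : ℤ) n ≠ 0) :
    IsUnit a := by
  have := NeZero.mk hn
  rw [Ne, jacobiSym.eq_zero_iff_not_coprime, not_not] at h
  rw [← ZMod.natCast_zmod_val a, ZMod.isUnit_iff_coprime]
  rwa [Int.gcd_natCast_natCast] at h

lemma mem_JSet_iff (n : ℕ) (hn : n ≠ 0) (a : ZMod n) :
    a ∈ JSet n ↔ jacobiSym (a.val : ℤ) n = 1 :=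
  ⟨fun h => h.2, fun h => ⟨isUnit_of_jacobi n hn a (by rw [h]; norm_num), h⟩⟩

lemma jacobi_val_mul (n : ℕ) (a b : ZMod n) : jacobiSym ((a * b).val : ℤ) n =
    jacobiSym (a.val : ℤ) n * jacobiSym (b.val : ℤ) n := by
  rw [ZMod.val_mul, Int.natCast_mod, ← jacobiSym.mod_left, Nat.cast_mul, jacobiSym.mul_left]

lemma jacobi_val_one (n : ℕ) : jacobiSym ((1 : ZMod n).val : ℤ) n = 1 := by
  have := jacobi_val_cast n 1
  rw [Nat.cast_one] at this
  rw [this]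
  simp

lemma glue (n : ℕ) (hsf : Squarefree n) {l : ℕ} (S : Fin l → ZMod n) (I : Finset (Fin l))
    (hI : I.Nonempty) (E : ℕ → Fin l → ℤˣ)
    (hE : ∀ p ∈ n.primeFactors, Ach (fun i => (S i).val) I p (E p))
    (h1 : ∀ i, ∏ p ∈ n.primeFactors, E p i = 1) : HasWZSSub (JSet n) S := by
  have hn : n ≠ 0 := hsf.ne_zero
  have := NeZero.mk hn
  have hE' : ∀ p, ∃ b : Fin l → ℕ, p ∈ n.primeFactors →
      (∀ i, jacobiSym (b i : ℤ) p = E p i) ∧ p ∣ ∑ i ∈ I, b i * (S i).val := by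
    intro p
    by_cases hp : p ∈ n.primeFactors
    · obtain ⟨b, hb⟩ := hE p hp
      exact ⟨b, fun _ => hb⟩
    · exact ⟨0, fun h => absurd h hp⟩
  choose b hb using hE'
  have crt : ∀ i, ∃ a : ℕ, ∀ p ∈ n.primeFactors, a ≡ b p i [MOD p] := by
    intro i
    obtain ⟨a, ha⟩ := Nat.chineseRemainderOfFinset (fun p => b p i) (fun p : ℕ => p) n.primeFactors
      (fun p hp => (Nat.prime_of_mem_primeFactors hp).ne_zero)
      (fun p hp q hq hpq => (Nat.coprime_primes (Nat.prime_of_mem_primeFactors hp)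
        (Nat.prime_of_mem_primeFactors hq)).2 hpq)
    exact ⟨a, ha⟩
  choose a ha using crt
  refine ⟨I, hI, fun i => (a i : ZMod n), fun i _ => ?_, ?_⟩
  · rw [mem_JSet_iff n hn, jacobi_val_cast, jacobi_prod _ n hsf]
    have e : ∀ p ∈ n.primeFactors, jacobiSym (a i : ℤ) p = ((E p i : ℤˣ) : ℤ) := by
      intro p hp
      rw [← (hb p hp).1 i]
      apply jacobiSym.mod_left'
      exact_mod_cast ha i p hp
    rw [Finset.prod_congr rfl e, ← Units.coe_prod, h1 i]
    rfl
  · have hd : n ∣ ∑ i ∈ I, a i * (S i).val := by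
      refine (dvd_of_eq (Nat.prod_primeFactors_of_squarefree hsf).symm).trans ?_
      refine Finset.prod_primes_dvd _ (fun p hp => (Nat.prime_of_mem_primeFactors hp).prime) ?_
      intro p hp
      rw [← Nat.modEq_zero_iff_dvd]
      refine Nat.ModEq.trans ?_ (Nat.modEq_zero_iff_dvd.2 (hb p hp).2)
      rw [← ZMod.natCast_eq_natCast_iff]
      push_cast
      refine Finset.sum_congr rfl fun i _ => ?_
      rw [(ZMod.natCast_eq_natCast_iff _ _ _).2 (ha i p hp)]
    rw [← ZMod.natCast_eq_zero_iff] at hd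
    push_cast at hd
    simpa using hd

/-! ### The upper bound for the Davenport constant -/

lemma upper (n : ℕ) (hsf : Squarefree n) (hp7 : ∀ p : ℕ, p.Prime → p ∣ n → 7 ≤ p)
    (k : ℕ) (hk : n.primeFactors.card = k) (hk2 : 2 ≤ k) (S : Fin (k + 1) → ZMod n) :
    HasWZSSub (JSet n) S := by
  have hn : n ≠ 0 := hsf.ne_zero
  have := NeZero.mk hn
  by_cases hz : ∃ i, S i = 0
  · obtain ⟨i, hi⟩ := hz
    refine ⟨{i}, Finset.singleton_nonempty i, fun _ => 1,
      fun _ _ => (mem_JSet_iff n hn 1).2 (jacobi_val_one n), ?_⟩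
    simp [hi]
  push Not at hz
  set x : Fin (k + 1) → ℕ := fun i => (S i).val with hx
  have pr : ∀ p ∈ n.primeFactors, p.Prime := fun p hp => Nat.prime_of_mem_primeFactors hp
  have p7 : ∀ p ∈ n.primeFactors, 7 ≤ p := fun p hp =>
    hp7 p (pr p hp) (Nat.dvd_of_mem_primeFactors hp)
  set N : ℕ → Finset (Fin (k + 1)) := fun p => Finset.univ.filter (fun i => ¬ p ∣ x i) with hN
  have hNJ : ∀ (J : Finset (Fin (k + 1))) p, J ∩ N p = J.filter (fun i => ¬ p ∣ x i) := by
    intro J p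
    ext i
    simp [hN]
  obtain ⟨J, hJ, hJ1, hJ2, -⟩ := reduce N n.primeFactors Finset.univ (by simp [hk])
  have hex : ∀ p, ∃ e, p ∈ n.primeFactors → Ach x J p e := by
    intro p
    by_cases hp : p ∈ n.primeFactors
    · obtain ⟨e, he⟩ := ach_exists x J p (pr p hp) (p7 p hp) (by rw [← hNJ]; exact hJ1 p hp)
      exact ⟨e, fun _ => he⟩
    · exact ⟨1, fun h => absurd h hp⟩
  choose E hE using hex
  suffices ∃ E' : ℕ → Fin (k + 1) → ℤˣ, (∀ p ∈ n.primeFactors, Ach x J p (E' p)) ∧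
      ∀ i, ∏ p ∈ n.primeFactors, E' p i = 1 by
    obtain ⟨E', h1, h2⟩ := this
    exact glue n hsf S J hJ E' h1 h2
  by_cases h0 : ∃ p ∈ n.primeFactors, J ∩ N p = ∅
  · obtain ⟨q, hq, hq0⟩ := h0
    refine combine_flex x J _ E hE q hq (ach_zero x J q (pr q hq) (p7 q hq) ?_)
    rw [hNJ, Finset.filter_eq_empty_iff] at hq0
    intro i hi
    simpa using hq0 hi
  have hJu : J = Finset.univ := hJ2.resolve_right h0
  by_cases h3 : ∃ p ∈ n.primeFactors, 2 < (J ∩ N p).card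
  · obtain ⟨q, hq, hq3⟩ := h3
    rw [hNJ] at hq3
    exact combine_flex x J _ E hE q hq (ach_three x J q (pr q hq) (p7 q hq) hq3)
  push Not at h0 h3
  have h2 : ∀ p ∈ n.primeFactors, (J ∩ N p).card = 2 := by
    intro p hp
    have a1 := h3 p hp
    have a2 := hJ1 p hp
    have a3 := (h0 p hp).card_pos
    omega
  obtain ⟨q, hq⟩ : n.primeFactors.Nonempty := Finset.card_pos.1 (by omega)
  obtain ⟨u, v, huv, hquv⟩ := Finset.card_eq_two.1 (h2 q hq)
  obtain ⟨i, hi⟩ : ∃ i, i ∉ J ∩ N q := by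
    by_contra hcon
    push Not at hcon
    have : J ∩ N q = Finset.univ := Finset.eq_univ_iff_forall.2 hcon
    have h4 := h2 q hq
    rw [this, Finset.card_univ, Fintype.card_fin] at h4
    omega
  obtain ⟨r, hr, hri⟩ : ∃ r ∈ n.primeFactors, ¬ r ∣ x i := by
    by_contra hcon
    push Not at hcon
    have hd : n ∣ (S i).val := by
      have h5 := Finset.prod_primes_dvd (x i) (fun p hp => (pr p hp).prime) hcon
      rwa [Nat.prod_primeFactors_of_squarefree hsf] at h5
    apply hz i
    rw [← ZMod.natCast_zmod_val (S i)]
    exact (ZMod.natCast_eq_zero_iff _ _).2 hd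
  have hiJ : i ∈ J := by rw [hJu]; exact Finset.mem_univ i
  have hiN : i ∈ J ∩ N r := by rw [hNJ]; exact Finset.mem_filter.2 ⟨hiJ, hri⟩
  have hqr : q ≠ r := by
    rintro rfl
    exact hi hiN
  obtain ⟨w, hiw, hrw⟩ : ∃ w, i ≠ w ∧ J ∩ N r = {i, w} := by
    obtain ⟨c, d, hcd, hh⟩ := Finset.card_eq_two.1 (h2 r hr)
    rw [hh] at hiN
    simp only [Finset.mem_insert, Finset.mem_singleton] at hiN
    rcases hiN with rfl | rfl
    · exact ⟨d, hcd, hh⟩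
    · exact ⟨c, hcd.symm, by rw [hh, Finset.pair_comm]⟩
  rw [hquv] at hi
  simp only [Finset.mem_insert, Finset.mem_singleton, not_or] at hi
  rw [hNJ] at hquv hrw
  obtain ⟨s, hs⟩ := ach_two x J q (pr q hq) (p7 q hq) u v huv hquv
  obtain ⟨s', hs'⟩ := ach_two x J r (pr r hr) (p7 r hr) i w hiw hrw
  exact combine_two x J _ E hE q r hq hr hqr u v i w huv hiw hi.1 hi.2 s s' hs hs'

lemma extremal_of_no_sub (n : ℕ) (hsf : Squarefree n)
    (hp7 : ∀ p : ℕ, p.Prime → p ∣ n → 7 ≤ p)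
    (k : ℕ) (hk : k = (Nat.primeFactorsList n).length) (hk2 : 2 ≤ k)
    (S : Fin k → ZMod n) (hS : ¬ HasWZSSub (JSet n) S) : IsExtremal n (JSet n) S := by
  refine ⟨?_, hS⟩
  have hcard : n.primeFactors.card = k := by
    rw [hk, Nat.primeFactors, List.toFinset_card_of_nodup]
    exact (Nat.squarefree_iff_nodup_primeFactorsList hsf.ne_zero).1 hsf
  have hmem : k + 1 ∈ {k | 0 < k ∧ ∀ S : Fin k → ZMod n, HasWZSSub (JSet n) S} :=
    ⟨Nat.succ_pos k, fun S => upper n hsf hp7 k hcard hk2 S⟩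
  have hle : DavW n (JSet n) ≤ k + 1 := Nat.sInf_le hmem
  have hin : DavW n (JSet n) ∈ {k | 0 < k ∧ ∀ S : Fin k → ZMod n, HasWZSSub (JSet n) S} :=
    Nat.sInf_mem ⟨_, hmem⟩
  have hlt : k < DavW n (JSet n) := by
    by_contra hcon
    push Not at hcon
    apply hS
    obtain ⟨I, hI, a, ha, hsum⟩ := hin.2 (fun i => S (Fin.castLE hcon i))
    refine ⟨I.map (Fin.castLEEmb hcon), hI.map, 
      fun j => if h : j.val < DavW n (JSet n) then a ⟨j.val, h⟩ else 1, ?_, ?_⟩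
    · intro j hj
      obtain ⟨i, hi, rfl⟩ := Finset.mem_map.1 hj
      simpa using ha i hi
    · rw [Finset.sum_map]
      simpa using hsum
  omega

lemma no_sub_of_equiv (n : ℕ) (hn : n ≠ 0) {k : ℕ} (S y : Fin k → ZMod n)
    (h : EquivWrt (JSet n) S y) (hy : ¬ HasWZSSub (JSet n) y) : ¬ HasWZSSub (JSet n) S := by
  rintro ⟨I, hI, w, hw, hsum⟩
  obtain ⟨a, c, σ, ha, hσ⟩ := h
  apply hy
  have hinv : ∀ i, a i * (a i)⁻¹ = 1 := fun i => ZMod.mul_inv_of_unit _ (ha i).1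
  refine ⟨I.map σ.toEmbedding, hI.map, fun j => w (σ.symm j) * (a (σ.symm j))⁻¹, ?_, ?_⟩
  · intro j hj
    obtain ⟨i, hi, rfl⟩ := Finset.mem_map.1 hj
    simp only [Equiv.coe_toEmbedding, Equiv.symm_apply_apply]
    rw [mem_JSet_iff n hn, jacobi_val_mul, (hw i hi).2, one_mul]
    have h1 := jacobi_val_mul n (a i) (a i)⁻¹
    rw [hinv, jacobi_val_one, (ha i).2, one_mul] at h1
    exact h1.symm
  · rw [Finset.sum_map]
    simp only [Equiv.coe_toEmbedding, Equiv.symm_apply_apply]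
    have h2 : ∀ i ∈ I, w i * (a i)⁻¹ * y (σ i) = c * (w i * S i) := by
      intro i _
      rw [hσ]
      linear_combination (w i * c * S i) * hinv i
    rw [Finset.sum_congr rfl h2, ← Finset.mul_sum, hsum, mul_zero]

theorem extremal_S_sufficient (n : ℕ) (hodd : Odd n) (hsf : Squarefree n)
    (hp7 : ∀ p : ℕ, p.Prime → p ∣ n → 7 ≤ p)
    (k : ℕ) (hk : k = (Nat.primeFactorsList n).length) (hk2 : 2 ≤ k)
    (S : Fin k → ZMod n) :
    ((∃ y : Fin k → ZMod n, EquivWrt (JSet n) S y ∧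
        ∃ p : ℕ, ∃ hp : p.Prime ∧ p ∣ n,
          ¬ p ∣ (y ⟨0, by omega⟩).val ∧
          (∀ i : Fin k, i.val ≠ 0 → p ∣ (y i).val) ∧
          IsExtremal (n / p) (USet (n / p))
            (fun i : Fin (k - 1) =>
              ZMod.castHom (Nat.div_dvd_of_dvd hp.2) (ZMod (n / p))
                (y ⟨i.val + 1, by have := i.isLt; omega⟩))) →
      IsExtremal n (JSet n) S) ∧
    ((k = 2 ∧ ∃ y : Fin k → ZMod n, EquivWrt (JSet n) S y ∧
        y ⟨0, by omega⟩ ∈ JSet n ∧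
        IsUnit (-(y ⟨1, by omega⟩)) ∧ (-(y ⟨1, by omega⟩)) ∉ JSet n) →
      IsExtremal n (JSet n) S) := by
  
  have hn : n ≠ 0 := hsf.ne_zero
  have := NeZero.mk hn
  refine ⟨?_, ?_⟩
  · rintro ⟨y, hSy, p, hp, hp0, hpi, hext⟩
    apply extremal_of_no_sub n hsf hp7 k hk hk2 S
    apply no_sub_of_equiv n hn S y hSy
    rintro ⟨I, hI, a, ha, hsum⟩
    have := Fact.mk hp.1
    have hdvd : ∀ z : ZMod n, ZMod.castHom hp.2 (ZMod p) z = 0 ↔ p ∣ z.val := by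
      intro z
      rw [ZMod.castHom_apply, ZMod.cast_eq_val, ZMod.natCast_eq_zero_iff]
    have h0I : (⟨0, by omega⟩ : Fin k) ∉ I := by
      intro h0
      have h1 := congrArg (ZMod.castHom hp.2 (ZMod p)) hsum
      rw [map_sum, map_zero, Finset.sum_eq_single_of_mem _ h0, map_mul] at h1
      · rcases mul_eq_zero.1 h1 with h2 | h2
        · exact ((ha _ h0).1.map (ZMod.castHom hp.2 (ZMod p))).ne_zero h2
        · exact hp0 ((hdvd _).1 h2)
      · intro i _ hi
        rw [map_mul, (hdvd _).2 (hpi i fun h => hi (Fin.ext h)), mul_zero]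
    apply hext.2
    let f : Fin (k - 1) ↪ Fin k := ⟨fun i => ⟨i.val + 1, by have := i.isLt; omega⟩, by
      intro i j hij
      simp only [Fin.mk.injEq] at hij
      exact Fin.ext (by omega)⟩
    have hmap : (Finset.univ.filter (fun i => f i ∈ I)).map f = I := by
      ext j
      simp only [Finset.mem_map, Finset.mem_filter, Finset.mem_univ, true_and]
      constructor
      · rintro ⟨i, hi, rfl⟩
        exact hi
      · intro hj
        have hj0 : j.val ≠ 0 := by
          intro h
          apply h0I
          convert hj
          exact h.symm
        have hfj : f ⟨j.val - 1, by have := j.isLt; omega⟩ = j :=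
          Fin.ext (show j.val - 1 + 1 = j.val by omega)
        exact ⟨_, by rw [hfj]; exact hj, hfj⟩
    refine ⟨Finset.univ.filter (fun i => f i ∈ I), ?_,
      fun i => ZMod.castHom (Nat.div_dvd_of_dvd hp.2) (ZMod (n / p)) (a (f i)), ?_, ?_⟩
    · rw [← hmap] at hI
      exact Finset.map_nonempty.1 hI
    · intro i hi
      exact (ha _ (Finset.mem_filter.1 hi).2).1.map _
    · have h1 := congrArg (ZMod.castHom (Nat.div_dvd_of_dvd hp.2) (ZMod (n / p))) hsum
      rw [← hmap, Finset.sum_map, map_sum, map_zero] at h1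
      rw [← h1]
      exact Finset.sum_congr rfl fun i _ => (map_mul _ _ _).symm
  · rintro ⟨rfl, y, hSy, hy0, hy1, hy1'⟩
    apply extremal_of_no_sub n hsf hp7 2 hk hk2 S
    apply no_sub_of_equiv n hn S y hSy
    rintro ⟨I, hI, a, ha, hsum⟩
    have : Fact (1 < n) := by
      refine ⟨?_⟩
      by_contra hcon
      have : n = 1 := by omega
      subst this
      simp at hk
    have hu0 : IsUnit (y 0) := hy0.1
    have hu1 : IsUnit (y 1) := by simpa using hy1.neg
    by_cases h0 : (0 : Fin 2) ∈ I <;> by_cases h1 : (1 : Fin 2) ∈ I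
    · have hI2 : I = Finset.univ := by
        ext i; fin_cases i <;> simp [h0, h1]
      rw [hI2, Fin.sum_univ_two] at hsum
      have heq : a 1 * -(y 1) = a 0 * y 0 := by linear_combination -hsum
      apply hy1'
      rw [mem_JSet_iff n hn]
      have h2 := congrArg (fun z : ZMod n => jacobiSym (z.val : ℤ) n) heq
      simp only [jacobi_val_mul] at h2
      rw [(ha 1 h1).2, (ha 0 h0).2, one_mul, one_mul] at h2
      exact h2.trans hy0.2
    · have hI2 : I = {0} := by
        ext i; fin_cases i <;> simp [h0, h1]
      rw [hI2, Finset.sum_singleton] at hsum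
      exact ((ha 0 h0).1.mul hu0).ne_zero hsum
    · have hI2 : I = {1} := by
        ext i; fin_cases i <;> simp [h0, h1]
      rw [hI2, Finset.sum_singleton] at hsum
      exact ((ha 1 h1).1.mul hu1).ne_zero hsum
    · obtain ⟨i, hi⟩ := hI
      fin_cases i
      · exact h0 hi
      · exact h1 hi
end

section
/- Let n be odd, let p' be a prime divisor of n, and let A = L(n;p'). Let p be a prime divisor of n such that p is coprime with n' = n/p. Then S(n') ⊆ f(A), where f : Z_n → Z_{n'} is the natural map. -/
open scoped BigOperators

theorem jac_congr {a b n : ℕ} (h : a ≡ b [MOD n]) :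
    jacobiSym (a : ℤ) n = jacobiSym (b : ℤ) n := by
  rw [jacobiSym.mod_left (a : ℤ), jacobiSym.mod_left (b : ℤ)]
  congr 1
  exact_mod_cast h

theorem exists_nonres (p : ℕ) (hp : p.Prime) (hp2 : p ≠ 2) :
    ∃ c : ℕ, Nat.Coprime c p ∧ jacobiSym (c : ℤ) p = -1 := by
  have : Fact p.Prime := ⟨hp⟩
  obtain ⟨x, hx⟩ := FiniteField.exists_nonsquare (F := ZMod p)
    (by rwa [ZMod.ringChar_zmod_n])
  have hJ : jacobiSym (x.val : ℤ) p = -1 := by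
    rw [← jacobiSym.legendreSym.to_jacobiSym, legendreSym.eq_neg_one_iff]
    simpa using hx
  refine ⟨x.val, ?_, hJ⟩
  by_contra h
  have := (jacobiSym.eq_zero_iff_not_coprime (a := (x.val : ℤ)) (b := p)).2 (by rw [Int.gcd_natCast_natCast]; exact h)
  rw [this] at hJ
  norm_num at hJ

theorem sset_subset_image_L (n p' p : ℕ) (hodd : Odd n)
    (hp' : p'.Prime) (hp'n : p' ∣ n) (hp : p.Prime) (hpn : p ∣ n)
    (hcop : Nat.Coprime p (n / p)) :
    JSet (n / p) ⊆
      (ZMod.castHom (Nat.div_dvd_of_dvd hpn) (ZMod (n / p))) '' LSet n p' := by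
  have hn0 : n ≠ 0 := by rintro rfl; simp at hodd
  obtain ⟨m, rfl⟩ := hpn
  have hmdef : p * m / p = m := Nat.mul_div_cancel_left m hp.pos
  have hp2 : p ≠ 2 := by
    rintro rfl
    exact (Nat.not_even_iff_odd.2 hodd) (even_two_mul m)
  have hm0 : m ≠ 0 := by rintro rfl; simp at hn0
  rintro a ⟨hau, haJ⟩
  have hm0' : p * m / p ≠ 0 := by rwa [hmdef]
  have : NeZero (p * m / p) := ⟨hm0'⟩
  have : NeZero (p * m) := ⟨hn0⟩
  obtain ⟨v, hv⟩ : ∃ v, v = a.val := ⟨_, rfl⟩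
  have hva : (v : ZMod (p * m / p)) = a := by rw [hv, ZMod.natCast_zmod_val]
  rw [← hv] at haJ
  have hacop : Nat.Coprime v m := by
    rw [← hva, ZMod.isUnit_iff_coprime] at hau
    rwa [hmdef] at hau
  have hap : p' ∣ m → Nat.Coprime v p' := fun h => Nat.Coprime.coprime_dvd_right h hacop
  obtain ⟨c, hcc, hcJ⟩ : ∃ c : ℕ, Nat.Coprime c p ∧
      (p' ∣ m → jacobiSym (c : ℤ) p = jacobiSym (v : ℤ) p') := by
    by_cases h : p' ∣ m
    · rcases jacobiSym.eq_one_or_neg_one (a := (v : ℤ)) (b := p')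
        (by rw [Int.gcd_natCast_natCast]; exact hap h) with h1 | h1
      · exact ⟨1, by simp, fun _ => by rw [h1]; simp⟩
      · obtain ⟨c, hc, hc'⟩ := exists_nonres p hp hp2
        exact ⟨c, hc, fun _ => by rw [h1, hc']⟩
    · exact ⟨1, by simp, fun h' => absurd h' h⟩
  rw [hmdef] at hcop haJ
  obtain ⟨k, hk1, hk2⟩ := Nat.chineseRemainder hcop c v
  have hJp : jacobiSym (k : ℤ) p = jacobiSym (c : ℤ) p := jac_congr hk1
  have hJm : jacobiSym (k : ℤ) m = 1 := by rw [jac_congr hk2, haJ]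
  have hkp : Nat.Coprime k p := by
    rw [Nat.Coprime, Nat.ModEq.gcd_eq hk1]; exact hcc
  have hkm : Nat.Coprime k m := by
    rw [Nat.Coprime, Nat.ModEq.gcd_eq hk2]; exact hacop
  refine ⟨(k : ZMod (p * m)), ⟨?_, ?_⟩, ?_⟩
  · rw [ZMod.isUnit_iff_coprime]
    exact Nat.Coprime.mul_right hkp hkm
  · rw [ZMod.val_natCast, jac_congr (Nat.mod_modEq k (p * m)),
      jac_congr ((Nat.mod_modEq k (p * m)).of_dvd hp'n)]
    have : NeZero p := ⟨hp.ne_zero⟩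
    have : NeZero m := ⟨hm0⟩
    rw [jacobiSym.mul_right, hJm, mul_one]
    by_cases h : p' ∣ m
    · rw [jac_congr (hk2.of_dvd h), hJp, hcJ h]
    · have : p' = p := by
        rcases (Nat.Prime.dvd_mul hp').1 hp'n with h' | h'
        · exact (Nat.prime_dvd_prime_iff_eq hp' hp).1 h'
        · exact absurd h' h
      rw [this]
  · rw [map_natCast, ← hva, ZMod.natCast_eq_natCast_iff, hmdef]
    exact hk2
end
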